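/- arXiv:2211.01528 — 5 statements merged into one kernel-verified Lean document; each statement's English description precedes it below -/
import Mathlib

section
/- Let μ be a joint probability distribution of (X, Y) on 𝒳 × 𝒴 with 𝒴 = {e_1, …, e_k} ⊂ ℝ^k the one-hot labels, let f*(x) = E_μ[Y | X = x] be the Bayes regressor and r* = f*♯μ^X. Fix a probability distribution q on 𝒴. Then for any randomized classifier h : 𝒳 → 𝒴 with h♯μ^X = q, there exists a coupling γ ∈ Γ(r*, q) such that Err(h) := P(h(X) ≠ Y) = (1/2) ∫_{Δ_k × 𝒴} ‖s − y‖₁ dγ(s, y). -/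
/-!
Take `γ` to be the joint law of `(f X, h X)`, i.e. the image of `μ^X ⊗ K` under `f × id`; its
marginals are `r*` and `q`. Given `X = x`, the label and the output of `h` are independent with
laws `f x` and `K x`, so the conditional error is the sum of `f x i * K x {y}` over pairs `i ≠ y`
(`IsBayesRegressor.lintegral_eq`). Half the ℓ₁ distance from `f x` to `e_y` is the sum of `f x i`
over `i ≠ y` (`half_l1Cost`), so the same sum is half the conditional transport cost.
-/

open MeasureTheory ProbabilityTheory
open scoped ENNReal NNReal BigOperators

noncomputable section

/-- The one-hot vector `e_i ∈ ℝ^k`. -/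
def oneHot (k : ℕ) (i : Fin k) : Fin k → ℝ := fun j => if j = i then 1 else 0

/-- ℓ₁ transportation cost between a point of ℝ^k and a vertex `e_y`. -/
def l1Cost (k : ℕ) (s : Fin k → ℝ) (y : Fin k) : ℝ≥0∞ :=
  ENNReal.ofReal (∑ j, |s j - oneHot k y j|)

/-- `γ` is a coupling of `p` and `q`. -/
def IsCoupling {α β : Type*} [MeasurableSpace α] [MeasurableSpace β]
    (γ : Measure (α × β)) (p : Measure α) (q : Measure β) : Prop :=
  γ.fst = p ∧ γ.snd = q

/-- Wasserstein-1 cost (under the ℓ₁ norm) between a distribution on the simplex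
and a distribution on the vertices (encoded by `Fin k`). -/
def W1 (k : ℕ) (p : Measure (Fin k → ℝ)) (q : Measure (Fin k)) : ℝ≥0∞ :=
  ⨅ (γ : Measure ((Fin k → ℝ) × Fin k)) (_ : IsCoupling γ p q),
    ∫⁻ z, l1Cost k z.1 z.2 ∂γ

/-- `f` is the Bayes regressor of the one-hot labels for `μ`, a joint distribution on
`𝒳 × 𝒴` with labels encoded by `Fin k`: it takes values in the simplex `Δ_k` and
`f x i` is the conditional probability of class `i` given `X = x`. -/
def IsBayesRegressor {𝒳 : Type*} [MeasurableSpace 𝒳] (k : ℕ)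
    (μ : Measure (𝒳 × Fin k)) (f : 𝒳 → Fin k → ℝ) : Prop :=
  Measurable f ∧ (∀ x, (∀ i, 0 ≤ f x i) ∧ ∑ i, f x i = 1) ∧
    ∀ (S : Set 𝒳), MeasurableSet S → ∀ i : Fin k,
      μ (S ×ˢ ({i} : Set (Fin k))) = ∫⁻ x in S, ENNReal.ofReal (f x i) ∂μ.fst

/-- On the simplex, half the ℓ₁ distance to the vertex `e_y` is the mass off `y`:
the coordinate `y` and the other coordinates both contribute `1 - s y`. -/
lemma half_l1Cost (k : ℕ) (s : Fin k → ℝ) (h0 : ∀ i, 0 ≤ s i) (h1 : ∑ i, s i = 1) (y : Fin k) :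
    (1 / 2) * l1Cost k s y = ∑ i ∈ Finset.univ.erase y, ENNReal.ofReal (s i) := by
  have hs : s y + ∑ i ∈ Finset.univ.erase y, s i = 1 := by
    rw [Finset.add_sum_erase _ _ (Finset.mem_univ y), h1]
  have hn : 0 ≤ ∑ i ∈ Finset.univ.erase y, s i := Finset.sum_nonneg fun i _ => h0 i
  have hsum : ∑ j, |s j - oneHot k y j| = 2 * ∑ i ∈ Finset.univ.erase y, s i := by
    rw [← Finset.add_sum_erase _ _ (Finset.mem_univ y)]
    have h2 : ∑ j ∈ Finset.univ.erase y, |s j - oneHot k y j|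
        = ∑ j ∈ Finset.univ.erase y, s j := by
      refine Finset.sum_congr rfl fun j hj => ?_
      simp [oneHot, Finset.ne_of_mem_erase hj, abs_of_nonneg (h0 j)]
    have h3 : |s y - oneHot k y y| = 1 - s y := by
      simp only [oneHot, if_true]
      rw [abs_of_nonpos (by linarith)]
      ring
    rw [h2, h3]
    linarith
  rw [l1Cost, hsum, ENNReal.ofReal_mul zero_le_two, ← mul_assoc,
    ENNReal.ofReal_sum_of_nonneg fun i _ => h0 i, ENNReal.ofReal_ofNat, one_div,
    ENNReal.inv_mul_cancel (by simp) (by simp), one_mul]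

/-- Disintegration of the joint law along its label: integrate over each class with
density `f · i` with respect to the marginal law of `X`. -/
lemma IsBayesRegressor.lintegral_eq {𝒳 : Type*} [MeasurableSpace 𝒳] {k : ℕ}
    {μ : Measure (𝒳 × Fin k)} {f : 𝒳 → Fin k → ℝ} (hf : IsBayesRegressor k μ f)
    {g : 𝒳 × Fin k → ℝ≥0∞} (hg : Measurable g) :
    ∫⁻ p, g p ∂μ = ∫⁻ x, ∑ i, ENNReal.ofReal (f x i) * g (x, i) ∂μ.fst := by
  obtain ⟨hm, -, hS⟩ := hf
  have hd : ∀ i, Measurable fun x => ENNReal.ofReal (f x i) := fun i => by fun_prop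
  have hi : ∀ i : Fin k, Measurable fun x : 𝒳 => (x, i) := fun i => by fun_prop
  have hμ : μ = Measure.sum fun i : Fin k =>
      (μ.fst.withDensity fun x => ENNReal.ofReal (f x i)).map fun x => (x, i) := by
    ext s hs
    rw [Measure.sum_apply _ hs, tsum_fintype]
    have hU : s = ⋃ i : Fin k, ((fun x => (x, i)) ⁻¹' s) ×ˢ ({i} : Set (Fin k)) := by
      ext ⟨x, i⟩
      simp
    conv_lhs => rw [hU]
    rw [measure_iUnion _ fun i => (hi i hs).prod (measurableSet_singleton i), tsum_fintype]
    · refine Finset.sum_congr rfl fun i _ => ?_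
      rw [hS _ (hi i hs) i, Measure.map_apply (hi i) hs, withDensity_apply _ (hi i hs)]
    · intro i j hij
      refine Set.disjoint_left.2 ?_
      rintro ⟨x, l⟩ ⟨-, h1⟩ ⟨-, h2⟩
      exact hij (h1.symm.trans h2)
  conv_lhs => rw [hμ]
  rw [lintegral_sum_measure, tsum_fintype, lintegral_finsetSum _ fun i _ => by fun_prop]
  refine Finset.sum_congr rfl fun i _ => ?_
  rw [lintegral_map hg (hi i)]
  exact lintegral_withDensity_eq_lintegral_mul _ (hd i) (hg.comp (hi i))

/-- **Lemma 3.2, forward direction.** For any randomized classifier `K` (a Markov kernel)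
whose output distribution on `μ^X` equals `q`, there is a coupling `γ` of
`r* = f*♯μ^X` and `q` whose ℓ₁ transportation cost equals twice the error rate. -/
theorem classifier_to_coupling
    {𝒳 : Type*} [MeasurableSpace 𝒳] (k : ℕ)
    (μ : Measure (𝒳 × Fin k)) [IsProbabilityMeasure μ]
    (f : 𝒳 → Fin k → ℝ) (hf : IsBayesRegressor k μ f)
    (q : Measure (Fin k)) [IsProbabilityMeasure q]
    (K : Kernel 𝒳 (Fin k)) [IsMarkovKernel K]
    (hK : μ.fst.bind (fun x => K x) = q) :
    ∃ γ : Measure ((Fin k → ℝ) × Fin k),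
      IsCoupling γ (μ.fst.map f) q ∧
        (∫⁻ p, K p.1 ({p.2}ᶜ) ∂μ) = (1 / 2) * ∫⁻ z, l1Cost k z.1 z.2 ∂γ := by
  obtain ⟨hm, hsimp, -⟩ := id hf
  have hφ : Measurable (Prod.map f id : 𝒳 × Fin k → (Fin k → ℝ) × Fin k) :=
    hm.prodMap measurable_id
  have hc : Measurable fun z : (Fin k → ℝ) × Fin k => l1Cost k z.1 z.2 := by
    refine measurable_from_prod_countable_left fun y => ?_
    simp only [l1Cost]
    fun_prop
  refine ⟨(μ.fst ⊗ₘ K).map (Prod.map f id), ⟨?_, ?_⟩, ?_⟩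
  · rw [Measure.fst, Measure.map_map measurable_fst hφ]
    change Measure.map (f ∘ Prod.fst) _ = _
    rw [← Measure.map_map hm measurable_fst, ← Measure.fst, Measure.fst_compProd]
  · rw [Measure.snd, Measure.map_map measurable_snd hφ]
    change (μ.fst ⊗ₘ K).snd = q
    rw [Measure.snd_compProd]
    exact hK
  · have hcφ : Measurable fun p : 𝒳 × Fin k => l1Cost k (Prod.map f id p).1 (Prod.map f id p).2 :=
      hc.comp hφ
    have hg : Measurable fun p : 𝒳 × Fin k => K p.1 ({p.2}ᶜ) :=
      measurable_from_prod_countable_left fun y =>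
        K.measurable_coe (measurableSet_singleton y).compl
    rw [hf.lintegral_eq hg, lintegral_map hc hφ, Measure.lintegral_compProd hcφ,
      ← lintegral_const_mul' _ _ (by simp)]
    refine lintegral_congr fun x => ?_
    have hcompl : ∀ i : Fin k, K x ({i}ᶜ) = ∑ y ∈ Finset.univ.erase i, K x {y} := fun i => by
      rw [sum_measure_singleton]
      congr 1
      ext y
      simp
    simp only [lintegral_fintype, Prod.map, id, hcompl, Finset.mul_sum, ← mul_assoc,
      half_l1Cost k (f x) (hsimp x).1 (hsimp x).2, Finset.sum_mul]
    -- both sides are the sum of `f x i * K x {y}` over all pairs `i ≠ y`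
    exact Finset.sum_comm' fun i y => by simp [eq_comm]

end
end

section
/- Let μ be a joint probability distribution of (X, Y, A) on 𝒳 × 𝒴 × [m] with 𝒴 = {e_1, …, e_k} ⊂ ℝ^k, let f* be the Bayes regressor, r*_a = f*♯(μ^X_a × {a}), and fix a probability distribution q on 𝒴. For each a, let T*_a : Δ_k → 𝒴 be an optimal transport from r*_a to q under the cost c(s,y) = ‖s − y‖₁ (a randomized function whose induced coupling achieves W₁(r*_a, q)). Then the randomized classifier h̄(x,a) = T*_a ∘ f*(x,a) satisfies Σ_{a∈[m]} Err_a(h̄) = (1/2) Σ_{a∈[m]} W₁(r*_a, q), and h̄♯(μ^X_a × {a}) = q for every a ∈ [m]; in particular h̄ satisfies demographic parity. -/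
/-!
For `s` in the simplex, `‖s - e_y‖₁ = 2 (1 - s y)`. Given `X = x` and `A = a`, the true label has
law `s = f (x, a)` and the prediction is drawn independently from `ρ = T a s`, so the conditional
error is `∑_{i ≠ y} s i * ρ {y} = ∑_y (1 - s y) * ρ {y}`, half of the conditional mean
transport cost (`lintegral_l1Cost_eq_two_mul_disagree`). Integrating over `x`, by
`lintegral_eq_of_isBayesRegressor` on the error side and by writing the induced coupling as a
composition product (`inducedCoupling_eq_compProd`) on the transport side, gives that the error on
group `a` is half the cost of the induced coupling, which is `W₁` by optimality. The output law
on group `a` is the second marginal of that coupling, namely `q`.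
-/

open MeasureTheory ProbabilityTheory
open scoped ENNReal NNReal BigOperators

noncomputable section

/-- Coupling induced by a randomized transport `T` applied to source `p`. -/
def inducedCoupling {k : ℕ} (p : Measure (Fin k → ℝ)) (T : Kernel (Fin k → ℝ) (Fin k)) :
    Measure ((Fin k → ℝ) × Fin k) :=
  p.bind (fun s => (T s).map (fun y => (s, y)))

/-- Disintegration of `μ` along the Bayes regressor: the label given `X = x` has law `f x`. -/
theorem lintegral_eq_of_isBayesRegressor {𝒳 : Type*} [MeasurableSpace 𝒳] {k : ℕ}
    {μ : Measure (𝒳 × Fin k)} {f : 𝒳 → Fin k → ℝ} (hf : IsBayesRegressor k μ f)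
    (g : 𝒳 → Fin k → ℝ≥0∞) (hg : ∀ i, Measurable fun x => g x i) :
    ∫⁻ p, g p.1 p.2 ∂μ = ∫⁻ x, ∑ i, ENNReal.ofReal (f x i) * g x i ∂μ.fst := by
  obtain ⟨hfm, -, hfμ⟩ := hf
  have hfi : ∀ i, Measurable fun x => ENNReal.ofReal (f x i) := fun i =>
    ((measurable_pi_apply i).comp hfm).ennreal_ofReal
  have hmeas : ∀ i : Fin k, MeasurableSet (Prod.snd ⁻¹' {i} : Set (𝒳 × Fin k)) := fun i =>
    measurable_snd (measurableSet_singleton i)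
  -- The part of `μ` carrying the label `i` has first marginal of density `f · i`.
  have hdens : ∀ i, (μ.restrict (Prod.snd ⁻¹' {i})).map Prod.fst
      = μ.fst.withDensity fun x => ENNReal.ofReal (f x i) := by
    intro i
    ext S hS
    rw [Measure.map_apply measurable_fst hS, Measure.restrict_apply (measurable_fst hS),
      withDensity_apply _ hS, ← hfμ S hS i, Set.prod_eq]
  have hcover : (⋃ i : Fin k, (Prod.snd ⁻¹' {i} : Set (𝒳 × Fin k))) = Set.univ := by
    ext p; simp
  have hdisj : Pairwise (Function.onFun Disjoint
      fun i : Fin k => (Prod.snd ⁻¹' {i} : Set (𝒳 × Fin k))) := by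
    intro i j hij
    exact Disjoint.preimage _ (by simpa using hij)
  rw [← setLIntegral_univ, ← hcover, lintegral_iUnion hmeas hdisj, tsum_fintype,
    lintegral_finsetSum (f := fun i x => ENNReal.ofReal (f x i) * g x i) _
      fun i _ => (hfi i).mul (hg i)]
  refine Finset.sum_congr rfl fun i _ => ?_
  have h : ∫⁻ p in Prod.snd ⁻¹' {i}, g p.1 p.2 ∂μ
      = ∫⁻ p in Prod.snd ⁻¹' {i}, g p.1 i ∂μ :=
    setLIntegral_congr_fun (hmeas i) fun p hp => by
      have hp' : p.2 = i := hp
      simp only [hp']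
  rw [h, ← lintegral_map (hg i) measurable_fst, hdens i,
    lintegral_withDensity_eq_lintegral_mul _ (hfi i) (hg i)]
  rfl

/-- On the simplex, `‖s - e_y‖₁ = 2 (1 - s y)`, with `1 - s y` written as the mass off `y` to
avoid truncated subtraction in `ℝ≥0∞`. -/
theorem l1Cost_of_mem_simplex {k : ℕ} {s : Fin k → ℝ} (h0 : ∀ i, 0 ≤ s i)
    (h1 : ∑ i, s i = 1) (y : Fin k) :
    l1Cost k s y = 2 * ∑ i ∈ Finset.univ.erase y, ENNReal.ofReal (s i) := by
  have hy := Finset.add_sum_erase Finset.univ s (Finset.mem_univ y)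
  have hnn : 0 ≤ ∑ i ∈ Finset.univ.erase y, s i := Finset.sum_nonneg fun i _ => h0 i
  have hsum : ∑ i ∈ Finset.univ.erase y, |s i - oneHot k y i|
      = ∑ i ∈ Finset.univ.erase y, s i := by
    refine Finset.sum_congr rfl fun i hi => ?_
    simp [oneHot, Finset.ne_of_mem_erase hi, abs_of_nonneg (h0 i)]
  have hys : |s y - oneHot k y y| = ∑ i ∈ Finset.univ.erase y, s i := by
    simp only [oneHot, if_true]
    rw [abs_of_nonpos (by linarith)]
    linarith
  rw [l1Cost, ← Finset.add_sum_erase Finset.univ _ (Finset.mem_univ y), hsum, hys, ← two_mul,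
    ENNReal.ofReal_mul zero_le_two, ENNReal.ofReal_sum_of_nonneg fun i _ => h0 i]
  simp

/-- For `s ∈ Δ_k`, a label drawn from `s` and an independent prediction drawn from `ρ` disagree
with probability `∑_{i ≠ y} s i * ρ {y}`, which is half the mean ℓ₁ cost of moving `s` to `ρ`. -/
theorem lintegral_l1Cost_eq_two_mul_disagree {k : ℕ} {s : Fin k → ℝ} (h0 : ∀ i, 0 ≤ s i)
    (h1 : ∑ i, s i = 1) (ρ : Measure (Fin k)) :
    ∫⁻ y, l1Cost k s y ∂ρ = 2 * ∑ i, ENNReal.ofReal (s i) * ρ {i}ᶜ := by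
  have hρ : ∀ i : Fin k, ρ {i}ᶜ = ∑ y ∈ Finset.univ.erase i, ρ {y} := by
    intro i
    rw [sum_measure_singleton]
    congr 1
    ext y
    simp
  rw [lintegral_fintype]
  simp only [l1Cost_of_mem_simplex h0 h1, hρ, Finset.mul_sum, Finset.sum_mul]
  rw [Finset.sum_comm' (t' := Finset.univ) (s' := fun i => Finset.univ.erase i)
    (by intro x y; simp [ne_comm])]
  simp only [mul_assoc]

theorem inducedCoupling_eq_compProd {k : ℕ} (p : Measure (Fin k → ℝ)) [SFinite p]
    (T : Kernel (Fin k → ℝ) (Fin k)) [IsMarkovKernel T] :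
    inducedCoupling p T = p ⊗ₘ T := by
  rw [Measure.compProd_eq_comp_prod, inducedCoupling]
  congr 1
  ext1 s
  rw [Kernel.prod_apply, Kernel.id_apply, Measure.dirac_prod]

theorem measurable_l1Cost (k : ℕ) :
    Measurable fun z : (Fin k → ℝ) × Fin k => l1Cost k z.1 z.2 := by
  refine measurable_from_prod_countable_left fun y => ?_
  unfold l1Cost
  fun_prop

/-- **Optimal Fair Classifier** (Theorem 3.3).  Fix a distribution `q` on the vertices,
let `r a = f*♯(μ^X_a × {a})` be the output distributions of the Bayes regressor, and let
`T a` be optimal transports from `r a` to `q` under the ℓ₁ cost (randomized maps whose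
induced couplings achieve `W₁(r a, q)`).  Then the classifier `h̄(x,a) = T a ∘ f*(x,a)`
has group-balanced error `(1/2) Σ_a W₁(r a, q)`, and its output distribution on every
group equals `q`; in particular it satisfies demographic parity. -/
theorem optimal_fair_classifier
    {𝒳 : Type*} [MeasurableSpace 𝒳] (k m : ℕ)
    (μ : Fin m → Measure (𝒳 × Fin k))
    (hμ : ∀ a, IsProbabilityMeasure (μ a))
    (f : 𝒳 × Fin m → Fin k → ℝ)
    (hf : ∀ a : Fin m, IsBayesRegressor k (μ a) (fun x => f (x, a)))
    (q : Measure (Fin k)) [IsProbabilityMeasure q]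
    (T : Fin m → Kernel (Fin k → ℝ) (Fin k)) (hT : ∀ a, IsMarkovKernel (T a))
    (hTopt : ∀ a : Fin m,
      IsCoupling (inducedCoupling (((μ a).fst).map (fun x => f (x, a))) (T a))
        (((μ a).fst).map (fun x => f (x, a))) q ∧
      (∫⁻ z, l1Cost k z.1 z.2
          ∂(inducedCoupling (((μ a).fst).map (fun x => f (x, a))) (T a))) =
        W1 k (((μ a).fst).map (fun x => f (x, a))) q) :
    (∑ a : Fin m, ∫⁻ p, (T a) (f (p.1, a)) ({p.2}ᶜ) ∂(μ a)) =
        (1 / 2) * ∑ a : Fin m, W1 k (((μ a).fst).map (fun x => f (x, a))) q ∧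
      ∀ a : Fin m, (μ a).fst.bind (fun x => (T a) (f (x, a))) = q := by
  have hfm : ∀ a, Measurable fun x => f (x, a) := fun a => (hf a).1
  have hprob : ∀ a, IsProbabilityMeasure (((μ a).fst).map fun x => f (x, a)) := fun a =>
    Measure.isProbabilityMeasure_map (hfm a).aemeasurable
  refine ⟨?_, fun a => ?_⟩
  · rw [Finset.mul_sum]
    refine Finset.sum_congr rfl fun a _ => ?_
    rw [← (hTopt a).2, inducedCoupling_eq_compProd,
      Measure.lintegral_compProd (measurable_l1Cost k),
      lintegral_map (measurable_l1Cost k).lintegral_kernel_prod_right' (hfm a),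
      lintegral_eq_of_isBayesRegressor (hf a) (fun x i => T a (f (x, a)) {i}ᶜ)
        fun i => ((T a).measurable_coe (measurableSet_singleton i).compl).comp (hfm a)]
    simp only [lintegral_l1Cost_eq_two_mul_disagree ((hf a).2.1 _).1 ((hf a).2.1 _).2]
    rw [lintegral_const_mul' _ _ ENNReal.ofNat_ne_top, ← mul_assoc, one_div,
      ENNReal.inv_mul_cancel two_ne_zero ENNReal.ofNat_ne_top, one_mul]
  · have h := (hTopt a).1.2
    rw [inducedCoupling_eq_compProd, Measure.snd_compProd] at h
    rw [← h]
    ext S hS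
    have hTf : Measurable fun x => T a (f (x, a)) := (T a).measurable.comp (hfm a)
    rw [Measure.bind_apply hS hTf.aemeasurable,
      Measure.bind_apply hS (T a).aemeasurable,
      lintegral_map ((T a).measurable_coe hS) (hfm a)]

end
end

section
/- Let μ be a joint probability distribution of (X, Y, A) on 𝒳 × 𝒴 × [m] with 𝒴 = {e_1, …, e_k} ⊂ ℝ^k, let f* be the Bayes regressor, and let Err* = (1/2) min_{q∈𝒬_k} Σ_{a∈[m]} W₁(r*_a, q) be the minimum demographic-parity-fair balanced error, where r*_a = f*♯(μ^X_a × {a}). Let f̃ : 𝒳 × [m] → Δ_k be any deterministic (measurable) predictor, r̃_a = f̃♯(μ^X_a × {a}), let q̃ ∈ 𝒬_k achieve min_{q∈𝒬_k} Σ_a W₁(r̃_a, q), and let h̄(x,a) = T*_a ∘ f̃(x,a) where T*_a is an optimal transport from r̃_a to q̃ under the ℓ₁ cost. Then 0 ≤ Σ_{a∈[m]} Err_a(h̄) − Err* ≤ Σ_{a∈[m]} E_{X∼μ^X_a}[ ‖f̃(X,a) − f*(X,a)‖₁ ]. -/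
/-!
For a point `s` of the simplex, `‖s - e_y‖₁ = 2 (1 - s_y)`. Hence the error of a randomized classifier
`K` on a group is half the expected cost `∫ ∫ ‖f*(x) - e_y‖₁ K(x, dy) dμ^X(x)`
(`error_eq_half_cost`), and everything reduces to transportation costs.

Any kernel `K : 𝒳 → 𝒴` and any `u : 𝒳 → ℝ^k` induce a coupling of `u♯μ^X` with the output distribution of
`K`, so the expected cost above is at least `W₁` (`W1_le_cost`). Applied to `u = f*` and
`K = T ∘ f̃`, whose output distribution is `q̃`, this is the lower bound.

For the upper bound, the triangle inequality replaces `f*` by `f̃` at the price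
`D = 𝔼‖f̃ - f*‖₁`; optimality of `T` and `q̃` turns the remaining cost into
`min_q Σ W₁(r̃_a, q)`; and `W₁(r̃_a, q) ≤ W₁(r*_a, q) + D_a` (`W1_perturb`), obtained by disintegrating a
coupling of `(r*_a, q)` into a kernel and composing it with `f*`. The total is `2 D + 2 Err*`, and
halving it gives the claim.
-/

open MeasureTheory ProbabilityTheory
open scoped ENNReal NNReal BigOperators

noncomputable section

theorem oneHot_dist_eq {k : ℕ} (s : Fin k → ℝ) (h0 : ∀ i, 0 ≤ s i) (h1 : ∑ i, s i = 1) (y : Fin k) :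
    ∑ j, |s j - oneHot k y j| = 2 * ∑ j ∈ Finset.univ.erase y, s j := by
  have hy := Finset.add_sum_erase Finset.univ s (Finset.mem_univ y)
  rw [h1] at hy
  have he : 0 ≤ ∑ j ∈ Finset.univ.erase y, s j := Finset.sum_nonneg fun j _ => h0 j
  rw [← Finset.add_sum_erase Finset.univ _ (Finset.mem_univ y)]
  have h2 : ∑ j ∈ Finset.univ.erase y, |s j - oneHot k y j| = ∑ j ∈ Finset.univ.erase y, s j := by
    refine Finset.sum_congr rfl fun j hj => ?_
    rw [oneHot, if_neg (Finset.ne_of_mem_erase hj), sub_zero, abs_of_nonneg (h0 j)]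
  rw [h2, oneHot, if_pos rfl, abs_of_nonpos (by linarith)]
  linarith

/-- On the simplex the cost of moving `s` to `e_y` is `2 (1 - s_y)`, written as a sum over the other
coordinates to avoid subtraction in `ℝ≥0∞`. -/
theorem l1Cost_eq {k : ℕ} (s : Fin k → ℝ) (h0 : ∀ i, 0 ≤ s i) (h1 : ∑ i, s i = 1) (y : Fin k) :
    l1Cost k s y = 2 * ∑ j ∈ Finset.univ.erase y, ENNReal.ofReal (s j) := by
  rw [l1Cost, oneHot_dist_eq s h0 h1, ENNReal.ofReal_mul (by norm_num),
    ENNReal.ofReal_sum_of_nonneg fun j _ => h0 j]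
  norm_num

theorem l1Cost_triangle {k : ℕ} (s t : Fin k → ℝ) (y : Fin k) :
    l1Cost k s y ≤ ENNReal.ofReal (∑ j, |s j - t j|) + l1Cost k t y := by
  unfold l1Cost
  rw [← ENNReal.ofReal_add (Finset.sum_nonneg fun _ _ => abs_nonneg _)
    (Finset.sum_nonneg fun _ _ => abs_nonneg _), ← Finset.sum_add_distrib]
  exact ENNReal.ofReal_le_ofReal (Finset.sum_le_sum fun j _ => abs_sub_le _ _ _)

/-- The expected cost of sending `u x` to a random vertex drawn from `K x`. -/
def kernelCost {𝒳 : Type*} [MeasurableSpace 𝒳] {k : ℕ} (ν : Measure 𝒳) (u : 𝒳 → Fin k → ℝ)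
    (K : Kernel 𝒳 (Fin k)) : ℝ≥0∞ :=
  ∫⁻ x, ∫⁻ y, l1Cost k (u x) y ∂(K x) ∂ν

/-- A randomized classifier `K` couples `u♯ν` with its own output distribution. -/
theorem W1_le_cost {𝒳 : Type*} [MeasurableSpace 𝒳] {k : ℕ} (ν : Measure 𝒳) [IsProbabilityMeasure ν]
    (u : 𝒳 → Fin k → ℝ) (hu : Measurable u) (K : Kernel 𝒳 (Fin k)) [IsMarkovKernel K] :
    W1 k (ν.map u) (ν.bind K) ≤ kernelCost ν u K := by
  have hmap : Measurable (Prod.map u (id : Fin k → Fin k)) := hu.prodMap measurable_id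
  have hc : IsCoupling ((ν ⊗ₘ K).map (Prod.map u id)) (ν.map u) (ν.bind K) := by
    constructor
    · rw [Measure.fst, Measure.map_map measurable_fst hmap]
      change (ν ⊗ₘ K).map (u ∘ Prod.fst) = _
      rw [← Measure.map_map hu measurable_fst]
      change (ν ⊗ₘ K).fst.map u = _
      rw [Measure.fst_compProd]
    · rw [Measure.snd, Measure.map_map measurable_snd hmap]
      change (ν ⊗ₘ K).snd = _
      rw [Measure.snd_compProd]
  unfold W1
  refine le_trans (iInf₂_le ((ν ⊗ₘ K).map (Prod.map u id)) hc) (le_of_eq ?_)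
  rw [lintegral_map (measurable_l1Cost k) hmap]
  exact Measure.lintegral_compProd ((measurable_l1Cost k).comp hmap)

theorem kernelCost_triangle {𝒳 : Type*} [MeasurableSpace 𝒳] {k : ℕ} (ν : Measure 𝒳)
    (u v : 𝒳 → Fin k → ℝ) (hu : Measurable u) (hv : Measurable v)
    (K : Kernel 𝒳 (Fin k)) [IsMarkovKernel K] :
    kernelCost ν u K ≤
      (∫⁻ x, ENNReal.ofReal (∑ j, |u x j - v x j|) ∂ν) + kernelCost ν v K := by
  unfold kernelCost
  rw [← lintegral_add_left (by fun_prop)]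
  refine lintegral_mono fun x => ?_
  calc ∫⁻ y, l1Cost k (u x) y ∂(K x)
      ≤ ∫⁻ y, (ENNReal.ofReal (∑ j, |u x j - v x j|) + l1Cost k (v x) y) ∂(K x) :=
        lintegral_mono fun y => l1Cost_triangle _ _ _
    _ = _ := by rw [lintegral_add_left measurable_const]; simp

theorem kernelCost_comap {𝒳 : Type*} [MeasurableSpace 𝒳] {k : ℕ} (ν : Measure 𝒳)
    [IsProbabilityMeasure ν] (u : 𝒳 → Fin k → ℝ) (hu : Measurable u)
    (T : Kernel (Fin k → ℝ) (Fin k)) [IsMarkovKernel T] :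
    kernelCost ν u (T.comap u hu) = ∫⁻ z, l1Cost k z.1 z.2 ∂((ν.map u) ⊗ₘ T) := by
  have := Measure.isProbabilityMeasure_map (μ := ν) hu.aemeasurable
  rw [Measure.lintegral_compProd (measurable_l1Cost k),
    lintegral_map (measurable_l1Cost k).lintegral_kernel_prod_right' hu]
  rfl

theorem bind_comap {𝒳 : Type*} [MeasurableSpace 𝒳] {k : ℕ} (ν : Measure 𝒳)
    [IsProbabilityMeasure ν] (u : 𝒳 → Fin k → ℝ) (hu : Measurable u)
    (T : Kernel (Fin k → ℝ) (Fin k)) [IsMarkovKernel T] :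
    ν.bind (T.comap u hu) = ((ν.map u) ⊗ₘ T).snd := by
  have := Measure.isProbabilityMeasure_map (μ := ν) hu.aemeasurable
  rw [Measure.snd_compProd]
  ext s hs
  rw [Measure.bind_apply hs (Kernel.aemeasurable _), Measure.bind_apply hs (Kernel.aemeasurable _),
    lintegral_map (T.measurable_coe hs) hu]
  rfl

theorem inducedCoupling_eq {k : ℕ} (p : Measure (Fin k → ℝ)) [IsProbabilityMeasure p]
    (T : Kernel (Fin k → ℝ) (Fin k)) [IsMarkovKernel T] :
    inducedCoupling p T = p ⊗ₘ T := by
  rw [Measure.compProd_eq_comp_prod, inducedCoupling]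
  congr 1
  funext s
  rw [Kernel.prod_apply, Kernel.id_apply, Measure.dirac_prod]

/-- `W₁` is stable under perturbation of the predictor: a coupling of `(u♯ν, q)` disintegrates into
`u♯ν` and a kernel `κ`, and `κ ∘ u` then couples `v♯ν` with `q`. -/
theorem W1_perturb {𝒳 : Type*} [MeasurableSpace 𝒳] {k : ℕ} [Nonempty (Fin k)] (ν : Measure 𝒳)
    [IsProbabilityMeasure ν] (u v : 𝒳 → Fin k → ℝ) (hu : Measurable u) (hv : Measurable v)
    (q : Measure (Fin k)) :
    W1 k (ν.map v) q ≤ (∫⁻ x, ENNReal.ofReal (∑ j, |v x j - u x j|) ∂ν) + W1 k (ν.map u) q := by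
  have := Measure.isProbabilityMeasure_map (μ := ν) hu.aemeasurable
  rw [W1.eq_def k (ν.map u), ENNReal.add_iInf]
  refine le_iInf fun γ => ?_
  by_cases hγ : IsCoupling γ (ν.map u) q
  swap
  · simp [hγ]
  simp only [hγ, iInf_pos]
  obtain ⟨h1, h2⟩ := hγ
  have : IsProbabilityMeasure γ := by
    constructor
    rw [← Measure.fst_univ, h1, measure_univ]
  have hd : (ν.map u) ⊗ₘ γ.condKernel = γ := by
    rw [← h1]; exact γ.disintegrate γ.condKernel
  have hq : ν.bind (γ.condKernel.comap u hu) = q := by rw [bind_comap, hd, h2]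
  calc W1 k (ν.map v) q ≤ kernelCost ν v (γ.condKernel.comap u hu) := by
        conv_lhs => rw [← hq]
        exact W1_le_cost _ _ hv _
    _ ≤ _ := kernelCost_triangle ν v u hv hu _
    _ = _ := by rw [kernelCost_comap, hd]

/-- Integration against the joint law, expressed through the Bayes regressor. -/
theorem lintegral_bayes {𝒳 : Type*} [MeasurableSpace 𝒳] {k : ℕ} (μ : Measure (𝒳 × Fin k))
    (f : 𝒳 → Fin k → ℝ) (hf : IsBayesRegressor k μ f)
    (F : 𝒳 × Fin k → ℝ≥0∞) (hF : Measurable F) :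
    ∫⁻ p, F p ∂μ = ∫⁻ x, ∑ i, ENNReal.ofReal (f x i) * F (x, i) ∂μ.fst := by
  obtain ⟨hm, -, hS⟩ := hf
  have hm' : ∀ i, Measurable fun x => ENNReal.ofReal (f x i) := fun i => by fun_prop
  have hμ : μ = ∑ i, (μ.fst.withDensity fun x => ENNReal.ofReal (f x i)).map fun x => (x, i) := by
    ext s hs
    have hsl : ∀ i : Fin k, MeasurableSet ((fun x : 𝒳 => (x, i)) ⁻¹' s) := fun i =>
      measurable_prodMk_right hs
    have hdec : s = ⋃ i : Fin k, ((fun x : 𝒳 => (x, i)) ⁻¹' s) ×ˢ ({i} : Set (Fin k)) := by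
      ext ⟨x, i⟩; simp
    have hdisj : Pairwise (Function.onFun Disjoint
        fun i : Fin k => ((fun x : 𝒳 => (x, i)) ⁻¹' s) ×ˢ ({i} : Set (Fin k))) := by
      intro i j hij
      exact Set.Disjoint.set_prod_right (by simpa using hij) _ _
    conv_lhs => rw [hdec]
    rw [measure_iUnion hdisj fun i => (hsl i).prod (measurableSet_singleton i), tsum_fintype,
      Measure.finsetSum_apply]
    refine Finset.sum_congr rfl fun i _ => ?_
    rw [hS _ (hsl i), Measure.map_apply measurable_prodMk_right hs, withDensity_apply _ (hsl i)]
  have hFi : ∀ i, Measurable fun x => F (x, i) := fun i => hF.comp measurable_prodMk_right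
  conv_lhs => rw [hμ]
  have hprod : ∀ i ∈ Finset.univ, Measurable fun x => ENNReal.ofReal (f x i) * F (x, i) :=
    fun i _ => (hm' i).mul (hFi i)
  rw [lintegral_finsetSum_measure, lintegral_finsetSum _ hprod]
  refine Finset.sum_congr rfl fun i _ => ?_
  rw [lintegral_map hF measurable_prodMk_right,
    lintegral_withDensity_eq_lintegral_mul _ (hm' i) (hFi i)]
  rfl

/-- The misclassification probability is half the expected cost at the Bayes regressor. -/
theorem error_eq_half_cost {𝒳 : Type*} [MeasurableSpace 𝒳] {k : ℕ} (μ : Measure (𝒳 × Fin k))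
    (f : 𝒳 → Fin k → ℝ) (hf : IsBayesRegressor k μ f) (K : Kernel 𝒳 (Fin k)) :
    ∫⁻ p, K p.1 ({p.2}ᶜ) ∂μ = (1 / 2) * kernelCost μ.fst f K := by
  have hF : Measurable fun p : 𝒳 × Fin k => K p.1 ({p.2}ᶜ) :=
    measurable_from_prod_countable_left fun i =>
      K.measurable_coe (measurableSet_singleton i).compl
  rw [lintegral_bayes μ f hf _ hF, kernelCost, ← lintegral_const_mul' _ _ (by simp)]
  refine lintegral_congr fun x => ?_
  obtain ⟨h0, h1⟩ := hf.2.1 x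
  have hc : ∀ i : Fin k, K x ({i}ᶜ) = ∑ y, if y ≠ i then K x {y} else 0 := by
    intro i
    have : ({i}ᶜ : Set (Fin k)) = ↑(Finset.univ.filter fun y : Fin k => y ≠ i) := by ext; simp
    rw [this, ← sum_measure_singleton, Finset.sum_filter]
  have he : ∀ y : Fin k, ∑ j ∈ Finset.univ.erase y, ENNReal.ofReal (f x j) =
      ∑ j, if y ≠ j then ENNReal.ofReal (f x j) else 0 := by
    intro y
    rw [← Finset.sum_filter]
    congr 1
    ext j; simp [eq_comm]
  rw [lintegral_fintype, Finset.mul_sum]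
  simp only [hc, Finset.mul_sum]
  rw [Finset.sum_comm]
  refine Finset.sum_congr rfl fun y _ => ?_
  have h2 : (1 / 2 : ℝ≥0∞) * 2 = 1 := by
    rw [one_div, ENNReal.inv_mul_cancel (by norm_num) (by norm_num)]
  rw [l1Cost_eq _ h0 h1, ← mul_assoc, ← mul_assoc, h2, one_mul, he, Finset.sum_mul]
  refine Finset.sum_congr rfl fun i _ => ?_
  split_ifs <;> simp

/-- **Error Propagation** (Theorem 3.4).  Post-processing an arbitrary deterministic
predictor `g ≈ f*` by transporting its group-conditional output distributions
`r̃ a = g♯(μ^X_a × {a})` to their barycenter `q̃` yields a classifier whose balanced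
error exceeds the minimum fair error `Err* = (1/2) min_q Σ_a W₁(r*_a, q)` by at most
`Σ_a E_{μ^X_a} ‖g(X,a) − f*(X,a)‖₁`, and is never below `Err*`. -/
theorem error_propagation
    {𝒳 : Type*} [MeasurableSpace 𝒳] (k m : ℕ)
    (μ : Fin m → Measure (𝒳 × Fin k))
    (hμ : ∀ a, IsProbabilityMeasure (μ a))
    (f : 𝒳 × Fin m → Fin k → ℝ)
    (hf : ∀ a : Fin m, IsBayesRegressor k (μ a) (fun x => f (x, a)))
    (g : 𝒳 × Fin m → Fin k → ℝ) (hg : Measurable g)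
    (hgΔ : ∀ p, (∀ i, 0 ≤ g p i) ∧ ∑ i, g p i = 1)
    (qt : Measure (Fin k)) [IsProbabilityMeasure qt]
    (hqt : (∑ a : Fin m, W1 k (((μ a).fst).map (fun x => g (x, a))) qt) =
      ⨅ (q : Measure (Fin k)) (_ : IsProbabilityMeasure q),
        ∑ a : Fin m, W1 k (((μ a).fst).map (fun x => g (x, a))) q)
    (T : Fin m → Kernel (Fin k → ℝ) (Fin k)) (hT : ∀ a, IsMarkovKernel (T a))
    (hTopt : ∀ a : Fin m,
      IsCoupling (inducedCoupling (((μ a).fst).map (fun x => g (x, a))) (T a))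
        (((μ a).fst).map (fun x => g (x, a))) qt ∧
      (∫⁻ z, l1Cost k z.1 z.2
          ∂(inducedCoupling (((μ a).fst).map (fun x => g (x, a))) (T a))) =
        W1 k (((μ a).fst).map (fun x => g (x, a))) qt) :
    ((1 / 2) * ⨅ (q : Measure (Fin k)) (_ : IsProbabilityMeasure q),
        ∑ a : Fin m, W1 k (((μ a).fst).map (fun x => f (x, a))) q) ≤
      (∑ a : Fin m, ∫⁻ p, (T a) (g (p.1, a)) ({p.2}ᶜ) ∂(μ a)) ∧
    (∑ a : Fin m, ∫⁻ p, (T a) (g (p.1, a)) ({p.2}ᶜ) ∂(μ a)) ≤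
      ((1 / 2) * ⨅ (q : Measure (Fin k)) (_ : IsProbabilityMeasure q),
          ∑ a : Fin m, W1 k (((μ a).fst).map (fun x => f (x, a))) q) +
        ∑ a : Fin m, ∫⁻ x, ENNReal.ofReal (∑ j, |g (x, a) j - f (x, a) j|) ∂(μ a).fst := by
  have hne : Nonempty (Fin k) := by
    obtain ⟨y, -⟩ := nonempty_of_measure_ne_zero (μ := qt) (s := Set.univ) (by simp)
    exact ⟨y⟩
  have hga : ∀ a, Measurable fun x => g (x, a) := fun a => hg.comp measurable_prodMk_right
  have hfst : ∀ a, IsProbabilityMeasure (μ a).fst := fun a => inferInstance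
  have hmap : ∀ a, IsProbabilityMeasure ((μ a).fst.map fun x => g (x, a)) := fun a =>
    Measure.isProbabilityMeasure_map (hga a).aemeasurable
  have herr : ∀ a, ∫⁻ p, (T a) (g (p.1, a)) ({p.2}ᶜ) ∂(μ a) =
      (1 / 2) * kernelCost (μ a).fst (fun x => f (x, a)) ((T a).comap _ (hga a)) := fun a =>
    error_eq_half_cost (μ a) (fun x => f (x, a)) (hf a) ((T a).comap _ (hga a))
  have hout : ∀ a, (μ a).fst.bind ((T a).comap _ (hga a)) = qt := fun a => by
    rw [bind_comap, ← inducedCoupling_eq]; exact (hTopt a).1.2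
  have hcost : ∀ a, kernelCost (μ a).fst (fun x => g (x, a)) ((T a).comap _ (hga a)) =
      W1 k (((μ a).fst).map (fun x => g (x, a))) qt := fun a => by
    rw [kernelCost_comap, ← inducedCoupling_eq]; exact (hTopt a).2
  simp only [herr, ← Finset.mul_sum]
  constructor
  · gcongr
    refine le_trans (iInf₂_le qt ‹IsProbabilityMeasure qt›) (Finset.sum_le_sum fun a _ => ?_)
    conv_lhs => rw [← hout a]
    exact W1_le_cost _ _ (hf a).1 _
  · set D := ∑ a : Fin m, ∫⁻ x, ENNReal.ofReal (∑ j, |g (x, a) j - f (x, a) j|) ∂(μ a).fst with hD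
    have hA : ∑ a, kernelCost (μ a).fst (fun x => f (x, a)) ((T a).comap _ (hga a)) ≤
        D + ∑ a, W1 k (((μ a).fst).map (fun x => g (x, a))) qt := by
      rw [hD, ← Finset.sum_add_distrib]
      refine Finset.sum_le_sum fun a _ => ?_
      rw [← hcost a]
      simp_rw [fun x j => abs_sub_comm (g (x, a) j) (f (x, a) j)]
      exact kernelCost_triangle _ _ _ (hf a).1 (hga a) _
    have hB : ∑ a, W1 k (((μ a).fst).map (fun x => g (x, a))) qt ≤
        D + ⨅ (q : Measure (Fin k)) (_ : IsProbabilityMeasure q),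
          ∑ a : Fin m, W1 k (((μ a).fst).map (fun x => f (x, a))) q := by
      rw [hqt, ENNReal.add_iInf]
      refine le_iInf fun q => ?_
      by_cases hq : IsProbabilityMeasure q
      swap
      · simp [hq]
      simp only [hq, iInf_pos]
      refine le_trans (iInf₂_le q hq) ?_
      rw [hD, ← Finset.sum_add_distrib]
      exact Finset.sum_le_sum fun a _ => W1_perturb _ _ _ (hf a).1 (hga a) q
    have h2 : (1 / 2 : ℝ≥0∞) * (D + D) = D := by
      rw [← two_mul, ← mul_assoc, one_div,
        ENNReal.inv_mul_cancel (by norm_num) (by norm_num), one_mul]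
    calc _ ≤ (1 / 2 : ℝ≥0∞) * (D + (D + _)) := by
          gcongr
          exact hA.trans (by gcongr)
      _ = _ := by rw [← add_assoc, mul_add, h2, add_comm]

end
end

section
/- Let p be a probability measure on Δ_k, q a probability measure on {e_1, …, e_k}, and γ ∈ Γ(p, q) an optimal coupling for the cost c(x,y) = ‖x − y‖₁. Then there exists ψ ∈ ℝ^k such that, defining the boundary set E = ∪_{i≠j} {x ∈ 𝔻^k : ‖x − e_i‖₁ − ψ_i = ‖x − e_j‖₁ − ψ_j} and the map g_ψ(x) = e_{argmin_{i∈[k]} (‖x − e_i‖₁ − ψ_i)} (ties broken to the smallest index), the conditional distribution of the second coordinate of γ given the first coordinate x is the point mass at g_ψ(x) for p-almost every x ∈ supp(p) \ E. -/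
/-!
Everything reduces to finding `ψ` such that `γ` is concentrated on the pairs `(x, y)` for which `y`
minimizes `i ↦ ‖x - e_i‖₁ - ψ_i`: off the decision boundaries this minimizer is unique, hence equal
to `g_ψ(x)`, and disintegration turns the statement into one about `γ.condKernel`.

Concentration means that for all `i, j`, almost no mass that `γ` sends to `e_i` sits at points with
`‖x - e_j‖₁ - ‖x - e_i‖₁ < ψ_j - ψ_i`. Such a `ψ` is a shortest-path potential. The predicate
`Exchange γ i j r` says that part of a multiple of `γ` can be re-routed so that one unit of mass
passes from the target `e_i` to the target `e_j`, all other target masses being kept, at an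
additional cost of at most `r`. Exchanges can be concatenated (`Exchange.trans`), a set of positive
`γ`-mass gives one (`exchange_of_pos`), and optimality of `γ` forbids closed exchanges of negative
cost (`Exchange.nonneg`). So `ψ_j := inf {r | ∃ i, Exchange γ i j r}` satisfies the triangle
inequality. It is bounded below when `e_j` carries mass, because every exchange ending at `j` can
then be closed up at cost at most `3`; vertices without mass get a very negative weight.
-/

open MeasureTheory ProbabilityTheory
open scoped ENNReal NNReal BigOperators

noncomputable section

/-- The probability simplex `Δ_k ⊂ ℝ^k`. -/
def simplexSet (k : ℕ) : Set (Fin k → ℝ) :=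
  {x | (∀ i, 0 ≤ x i) ∧ ∑ i, x i = 1}

/-- The index minimizing `v`, ties broken to the smallest index. -/
def argminIdx {k : ℕ} [NeZero k] (v : Fin k → ℝ) : Fin k :=
  (Finset.univ.filter fun i => ∀ j, v i ≤ v j).min' (by
    obtain ⟨i, -, hi⟩ := Finset.exists_min_image Finset.univ v ⟨0, Finset.mem_univ 0⟩
    exact ⟨i, Finset.mem_filter.mpr ⟨Finset.mem_univ i, fun j => hi j (Finset.mem_univ j)⟩⟩)

/-- The weighted-nearest-vertex map `g_ψ(x) = e_{argmin_i (‖x − e_i‖₁ − ψ_i)}`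
(ties broken to the smallest index), with vertices encoded by `Fin k`. -/
def gMap {k : ℕ} [NeZero k] (ψ : Fin k → ℝ) (x : Fin k → ℝ) : Fin k :=
  argminIdx (fun i => (∑ l, |x l - oneHot k i l|) - ψ i)

/-- The real-valued `ℓ₁` distance from `x` to the vertex `e_y`. -/
def l1Dist (k : ℕ) (x : Fin k → ℝ) (y : Fin k) : ℝ := ∑ l, |x l - oneHot k y l|

lemma l1Dist_nonneg {k : ℕ} (x : Fin k → ℝ) (y : Fin k) : 0 ≤ l1Dist k x y :=
  Finset.sum_nonneg fun _ _ => abs_nonneg _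

lemma sum_abs_oneHot {k : ℕ} (i : Fin k) : ∑ l, |oneHot k i l| = 1 := by
  simp [oneHot, apply_ite abs]

lemma l1Dist_le_add_two {k : ℕ} (x : Fin k → ℝ) (i j : Fin k) :
    l1Dist k x j ≤ l1Dist k x i + 2 := by
  have h : l1Dist k x j ≤ l1Dist k x i + (∑ l, |oneHot k i l| + ∑ l, |oneHot k j l|) := by
    unfold l1Dist
    rw [← Finset.sum_add_distrib, ← Finset.sum_add_distrib]
    refine Finset.sum_le_sum fun l _ => ?_
    have h1 := abs_sub_le (x l) (oneHot k i l) (oneHot k j l)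
    have h2 := abs_sub (oneHot k i l) (oneHot k j l)
    linarith
  rw [sum_abs_oneHot, sum_abs_oneHot] at h
  linarith

lemma l1Dist_le_two {k : ℕ} {x : Fin k → ℝ} (hx : x ∈ simplexSet k) (i : Fin k) :
    l1Dist k x i ≤ 2 := by
  have h : l1Dist k x i ≤ ∑ l, x l + ∑ l, |oneHot k i l| := by
    unfold l1Dist
    rw [← Finset.sum_add_distrib]
    refine Finset.sum_le_sum fun l _ => ?_
    have h2 := abs_sub (x l) (oneHot k i l)
    rwa [abs_of_nonneg (hx.1 l)] at h2
  rw [sum_abs_oneHot, hx.2] at h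
  linarith

lemma measurable_l1Dist_left {k : ℕ} (i : Fin k) : Measurable fun x => l1Dist k x i := by
  unfold l1Dist
  fun_prop

lemma measurable_l1Dist (k : ℕ) :
    Measurable fun z : (Fin k → ℝ) × Fin k => l1Dist k z.1 z.2 :=
  measurable_from_prod_countable_left fun y => measurable_l1Dist_left y

lemma measurableSet_simplexSet (k : ℕ) : MeasurableSet (simplexSet k) := by
  have h : simplexSet k = (⋂ i, {x | 0 ≤ x i}) ∩ {x | ∑ i, x i = 1} := by
    ext x; simp [simplexSet]
  rw [h]
  refine (MeasurableSet.iInter fun i => ?_).inter ?_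
  · exact measurableSet_le measurable_const (measurable_pi_apply i)
  · exact measurableSet_eq_fun (by fun_prop) measurable_const

/-- A measure whose first marginal lives on the simplex gives finite total cost. -/
lemma integrable_l1Dist {k : ℕ} (μ : Measure ((Fin k → ℝ) × Fin k)) [IsFiniteMeasure μ]
    (h : ∀ᵐ x ∂μ.fst, x ∈ simplexSet k) :
    Integrable (fun z => l1Dist k z.1 z.2) μ := by
  refine Integrable.of_bound (measurable_l1Dist k).aestronglyMeasurable 2 ?_
  have h' : ∀ᵐ z ∂μ, z.1 ∈ simplexSet k := ae_of_ae_map measurable_fst.aemeasurable h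
  filter_upwards [h'] with z hz
  rw [Real.norm_of_nonneg (l1Dist_nonneg _ _)]
  exact l1Dist_le_two hz _

/-- `Exchange γ i j r`: a part `α` of a multiple of `γ` can be re-routed to `β`, with the same first
marginal, so that in the second marginal one unit of mass moves from `i` to `j` and nothing else
changes, at an additional cost of at most `r`. -/
def Exchange {k : ℕ} (γ : Measure ((Fin k → ℝ) × Fin k)) (i j : Fin k) (r : ℝ) : Prop :=
  ∃ (α β : Measure ((Fin k → ℝ) × Fin k)) (C : ℝ≥0), α ≤ C • γ ∧ β.fst = α.fst ∧
    α.snd + Measure.dirac j = β.snd + Measure.dirac i ∧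
    ∫ z, l1Dist k z.1 z.2 ∂β ≤ ∫ z, l1Dist k z.1 z.2 ∂α + r

section

variable {k : ℕ} {γ α β : Measure ((Fin k → ℝ) × Fin k)} {C : ℝ≥0}

lemma isFiniteMeasure_of_fst_eq [IsFiniteMeasure α] (h : β.fst = α.fst) : IsFiniteMeasure β := by
  constructor
  rw [← Measure.fst_univ, h]
  exact measure_lt_top _ _

lemma ae_fst_mem_simplexSet (hs : ∀ᵐ x ∂γ.fst, x ∈ simplexSet k) (h : α ≤ C • γ) :
    ∀ᵐ x ∂α.fst, x ∈ simplexSet k := by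
  have h1 : α ≪ γ := (Measure.absolutelyContinuous_of_le h).trans
    Measure.smul_absolutelyContinuous
  exact (h1.map measurable_fst).ae_le hs

lemma Exchange.refl (i : Fin k) : Exchange γ i i 0 :=
  ⟨0, 0, 0, by simp, rfl, rfl, by simp⟩

variable [IsFiniteMeasure γ]

lemma Exchange.trans (hs : ∀ᵐ x ∂γ.fst, x ∈ simplexSet k) {i j l : Fin k} {r s : ℝ}
    (h₁ : Exchange γ i j r) (h₂ : Exchange γ j l s) : Exchange γ i l (r + s) := by
  obtain ⟨α₁, β₁, C₁, hle₁, hf₁, hm₁, hc₁⟩ := h₁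
  obtain ⟨α₂, β₂, C₂, hle₂, hf₂, hm₂, hc₂⟩ := h₂
  have : IsFiniteMeasure α₁ := isFiniteMeasure_of_le _ hle₁
  have : IsFiniteMeasure α₂ := isFiniteMeasure_of_le _ hle₂
  have : IsFiniteMeasure β₁ := isFiniteMeasure_of_fst_eq hf₁
  have : IsFiniteMeasure β₂ := isFiniteMeasure_of_fst_eq hf₂
  have hα₁ := ae_fst_mem_simplexSet hs hle₁
  have hα₂ := ae_fst_mem_simplexSet hs hle₂
  refine ⟨α₁ + α₂, β₁ + β₂, C₁ + C₂, ?_, ?_, ?_, ?_⟩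
  · rw [add_smul]
    exact add_le_add hle₁ hle₂
  · rw [Measure.fst_add, Measure.fst_add, hf₁, hf₂]
  · rw [Measure.snd_add, Measure.snd_add]
    -- The intermediate Dirac mass at `j` cancels because all measures involved are finite.
    ext A hA
    have e₁ := congrArg (fun μ => μ A) hm₁
    have e₂ := congrArg (fun μ => μ A) hm₂
    simp only [Measure.add_apply] at e₁ e₂ ⊢
    have hj : Measure.dirac j A ≠ ∞ := measure_ne_top _ _
    rw [← ENNReal.add_left_inj hj]
    calc α₁.snd A + α₂.snd A + Measure.dirac l A + Measure.dirac j A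
        = (α₁.snd A + Measure.dirac j A) + (α₂.snd A + Measure.dirac l A) := by ring
      _ = _ := by rw [e₁, e₂]; ring
  · rw [integral_add_measure (integrable_l1Dist _ hα₁) (integrable_l1Dist _ hα₂),
      integral_add_measure (integrable_l1Dist _ (hf₁ ▸ hα₁)) (integrable_l1Dist _ (hf₂ ▸ hα₂))]
    linarith

/-- If `γ` sends mass to `i` from points where switching to `j` costs less than `r`, re-routing
(the normalization of) exactly this mass is an exchange. -/
lemma exchange_of_pos (hs : ∀ᵐ x ∂γ.fst, x ∈ simplexSet k) {i j : Fin k} {r : ℝ}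
    (h : γ {z | z.2 = i ∧ l1Dist k z.1 j - l1Dist k z.1 i < r} ≠ 0) : Exchange γ i j r := by
  set A : Set ((Fin k → ℝ) × Fin k) := {z | z.2 = i ∧ l1Dist k z.1 j - l1Dist k z.1 i < r} with hA
  have hAm : MeasurableSet A := by
    refine (measurableSet_eq_fun measurable_snd measurable_const).inter
      (measurableSet_lt (f := fun z : (Fin k → ℝ) × Fin k => l1Dist k z.1 j - l1Dist k z.1 i)
        (((measurable_l1Dist_left j).comp measurable_fst).sub
          ((measurable_l1Dist_left i).comp measurable_fst)) measurable_const)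
  have hAfin : γ A ≠ ∞ := measure_ne_top _ _
  set C : ℝ≥0 := ((γ A)⁻¹).toNNReal with hC
  have hC' : (C : ℝ≥0∞) = (γ A)⁻¹ := ENNReal.coe_toNNReal (ENNReal.inv_ne_top.2 h)
  set α : Measure ((Fin k → ℝ) × Fin k) := C • γ.restrict A with hα
  have hαuniv : α Set.univ = 1 := by
    rw [hα, Measure.smul_apply, Measure.restrict_apply_univ, ENNReal.smul_def, hC', smul_eq_mul,
      ENNReal.inv_mul_cancel h hAfin]
  have : IsProbabilityMeasure α := ⟨hαuniv⟩
  have hle : α ≤ C • γ := by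
    rw [hα]
    gcongr
    exact Measure.restrict_le_self
  have hαA : ∀ᵐ z ∂α, z ∈ A :=
    Measure.smul_absolutelyContinuous.ae_le (ae_restrict_mem hAm)
  set f : (Fin k → ℝ) × Fin k → (Fin k → ℝ) × Fin k := fun z => (z.1, j) with hf
  have hfm : Measurable f := by fun_prop
  have hfst : (α.map f).fst = α.fst := by
    rw [Measure.fst, Measure.map_map measurable_fst hfm]
    rfl
  have hss := ae_fst_mem_simplexSet hs hle
  have : IsFiniteMeasure (α.map f) := isFiniteMeasure_of_fst_eq hfst
  refine ⟨α, α.map f, C, hle, hfst, ?_, ?_⟩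
  · have h1 : α.snd = Measure.dirac i := by
      rw [Measure.snd, Measure.map_congr (g := fun _ => i) (hαA.mono fun z hz => hz.1),
        Measure.map_const, hαuniv, one_smul]
    have h2 : (α.map f).snd = Measure.dirac j := by
      rw [Measure.snd, Measure.map_map measurable_snd hfm,
        show Prod.snd ∘ f = fun _ => j from rfl, Measure.map_const, hαuniv, one_smul]
    rw [h1, h2, add_comm]
  · rw [integral_map hfm.aemeasurable (measurable_l1Dist k).aestronglyMeasurable]
    have hi := integrable_l1Dist α hss
    have hj := integrable_l1Dist (α.map f) (hfst ▸ hss)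
    have hj' : Integrable (fun z => l1Dist k (f z).1 (f z).2) α := hj.comp_measurable hfm
    calc ∫ z, l1Dist k (f z).1 (f z).2 ∂α
        ≤ ∫ z, (l1Dist k z.1 z.2 + r) ∂α := by
          refine integral_mono_ae hj' (hi.add (integrable_const r)) ?_
          filter_upwards [hαA] with z hz
          have h1 : z.2 = i := hz.1
          have h2 := hz.2
          simp only [hf, h1]
          linarith
      _ = ∫ z, l1Dist k z.1 z.2 ∂α + r := by
          rw [integral_add hi (integrable_const r)]
          simp

/-- A closed exchange yields a competitor to `γ`, so for optimal `γ` its cost is nonnegative. -/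
lemma Exchange.nonneg (hs : ∀ᵐ x ∂γ.fst, x ∈ simplexSet k)
    (hopt : ∫⁻ z, l1Cost k z.1 z.2 ∂γ = W1 k γ.fst γ.snd) {i : Fin k} {r : ℝ}
    (h : Exchange γ i i r) : 0 ≤ r := by
  obtain ⟨α, β, C, hle, hf, hm, hc⟩ := h
  -- Enlarging `C` makes it invertible.
  replace hle : α ≤ (C + 1) • γ := hle.trans (by
    rw [add_smul]
    exact Measure.le_add_right le_rfl)
  set D : ℝ≥0 := C + 1 with hD
  have hDD : D⁻¹ * D = 1 := inv_mul_cancel₀ (by positivity)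
  have : IsFiniteMeasure α := isFiniteMeasure_of_le _ hle
  have : IsFiniteMeasure β := isFiniteMeasure_of_fst_eq hf
  have hα := ae_fst_mem_simplexSet hs hle
  have hsnd : β.snd = α.snd := by
    ext A hA
    have e := congrArg (fun μ => μ A) hm
    simp only [Measure.add_apply] at e
    exact ((ENNReal.add_left_inj (measure_ne_top _ _)).1 e).symm
  set δ := D • γ - α with hδ
  have hδα : δ + α = D • γ := Measure.sub_add_cancel_of_le hle
  have hcoup : IsCoupling (D⁻¹ • (δ + β)) γ.fst γ.snd := by
    constructor
    · rw [Measure.fst, Measure.map_smul, ← Measure.fst, Measure.fst_add, hf, ← Measure.fst_add,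
        hδα, Measure.fst, Measure.map_smul, smul_smul, hDD, one_smul]
      rfl
    · rw [Measure.snd, Measure.map_smul, ← Measure.snd, Measure.snd_add, hsnd, ← Measure.snd_add,
        hδα, Measure.snd, Measure.map_smul, smul_smul, hDD, one_smul]
      rfl
  have hWle : ∫⁻ z, l1Cost k z.1 z.2 ∂γ ≤ ∫⁻ z, l1Cost k z.1 z.2 ∂(D⁻¹ • (δ + β)) := by
    rw [hopt]
    unfold W1
    exact iInf₂_le (D⁻¹ • (δ + β)) hcoup
  have hlint : ∀ μ : Measure ((Fin k → ℝ) × Fin k), IsFiniteMeasure μ →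
      (∀ᵐ x ∂μ.fst, x ∈ simplexSet k) →
      ∫⁻ z, l1Cost k z.1 z.2 ∂μ = ENNReal.ofReal (∫ z, l1Dist k z.1 z.2 ∂μ) := by
    intro μ _ hμ
    rw [ofReal_integral_eq_lintegral_ofReal (integrable_l1Dist μ hμ)
      (Filter.Eventually.of_forall fun z => l1Dist_nonneg _ _)]
    rfl
  have hδle : δ ≤ D • γ := Measure.sub_le
  have : IsFiniteMeasure δ := isFiniteMeasure_of_le _ hδle
  have hδfin : ∫⁻ z, l1Cost k z.1 z.2 ∂δ ≠ ∞ := by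
    rw [hlint δ inferInstance (ae_fst_mem_simplexSet hs hδle)]
    exact ENNReal.ofReal_ne_top
  have hmul : (∫⁻ z, l1Cost k z.1 z.2 ∂δ) + ∫⁻ z, l1Cost k z.1 z.2 ∂α
      ≤ (∫⁻ z, l1Cost k z.1 z.2 ∂δ) + ∫⁻ z, l1Cost k z.1 z.2 ∂β := by
    rw [← lintegral_add_measure, hδα, ← lintegral_add_measure, lintegral_smul_measure]
    rw [lintegral_smul_measure] at hWle
    calc D • ∫⁻ z, l1Cost k z.1 z.2 ∂γ
        ≤ D • (D⁻¹ • ∫⁻ z, l1Cost k z.1 z.2 ∂(δ + β)) := by gcongr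
      _ = _ := by rw [smul_smul, mul_comm, hDD, one_smul]
  have hfinal := (ENNReal.add_le_add_iff_left hδfin).1 hmul
  rw [hlint α inferInstance hα, hlint β inferInstance (hf ▸ hα),
    ENNReal.ofReal_le_ofReal_iff (integral_nonneg fun z => l1Dist_nonneg _ _)] at hfinal
  linarith

/-- Existence of Kantorovich potentials: for optimal `γ`, almost every `(x, y)` has `y` among the
minimizers of `i ↦ ‖x - e_i‖₁ - ψ_i`. -/
lemma exists_potential (hs : ∀ᵐ x ∂γ.fst, x ∈ simplexSet k)
    (hopt : ∫⁻ z, l1Cost k z.1 z.2 ∂γ = W1 k γ.fst γ.snd) :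
    ∃ ψ : Fin k → ℝ, ∀ᵐ z ∂γ, ∀ j, l1Dist k z.1 z.2 - ψ z.2 ≤ l1Dist k z.1 j - ψ j := by
  classical
  set S : Fin k → Set ℝ := fun j => {r | ∃ i, Exchange γ i j r} with hS
  -- When `j` carries mass, any exchange ending at `j` is closed up by one of cost `3`.
  have hlb : ∀ j, γ {z | z.2 = j} ≠ 0 → ∀ r ∈ S j, -3 ≤ r := by
    rintro j hj r ⟨i, hr⟩
    have hback : Exchange γ j i 3 := by
      refine exchange_of_pos hs ?_
      convert hj using 4 with z
      refine and_iff_left ?_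
      have := l1Dist_le_add_two z.1 j i
      linarith
    have := (hr.trans hs hback).nonneg hs hopt
    linarith
  have hne : ∀ j, (S j).Nonempty := fun j => ⟨0, j, Exchange.refl j⟩
  -- Since `sInf (S i) ≥ -3` whenever `i` carries mass and distances to two vertices differ by at
  -- most `2`, the value `-6` makes a massless vertex harmless.
  refine ⟨fun j => if γ {z | z.2 = j} = 0 then -6 else sInf (S j), ?_⟩
  set ψ : Fin k → ℝ := fun j => if γ {z | z.2 = j} = 0 then -6 else sInf (S j) with hψ
  have key : ∀ i j, γ {z | z.2 = i ∧ l1Dist k z.1 j - l1Dist k z.1 i < ψ j - ψ i} = 0 := by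
    intro i j
    by_cases hi : γ {z | z.2 = i} = 0
    · exact measure_mono_null (fun z hz => hz.1) hi
    have hψi : ψ i = sInf (S i) := if_neg hi
    by_cases hj : γ {z | z.2 = j} = 0
    · have hψj : ψ j = -6 := if_pos hj
      have h3 : -3 ≤ ψ i := hψi ▸ le_csInf (hne i) (hlb i hi)
      convert measure_empty (μ := γ) using 2
      refine Set.eq_empty_of_forall_notMem fun z hz => ?_
      have h1 := l1Dist_le_add_two z.1 j i
      have h2 := hz.2
      linarith
    have hψj : ψ j = sInf (S j) := if_neg hj
    -- The strict inequality is exhausted by countably many strict gaps.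
    have hsub : {z : (Fin k → ℝ) × Fin k |
        z.2 = i ∧ l1Dist k z.1 j - l1Dist k z.1 i < ψ j - ψ i} ⊆
        ⋃ n : ℕ, {z | z.2 = i ∧
          l1Dist k z.1 j - l1Dist k z.1 i < ψ j - ψ i - 1 / ((n : ℝ) + 1)} := by
      intro z hz
      obtain ⟨n, hn⟩ := exists_nat_one_div_lt (sub_pos.2 hz.2)
      exact Set.mem_iUnion.2 ⟨n, hz.1, by linarith⟩
    refine measure_mono_null hsub (measure_iUnion_null fun n => ?_)
    by_contra hpos
    have hex := exchange_of_pos hs hpos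
    have hle : ψ j - (ψ j - ψ i - 1 / ((n : ℝ) + 1)) ≤ sInf (S i) := by
      refine le_csInf (hne i) ?_
      rintro r ⟨l, hr⟩
      have h1 : sInf (S j) ≤ r + (ψ j - ψ i - 1 / ((n : ℝ) + 1)) :=
        csInf_le ⟨-3, hlb j hj⟩ ⟨l, hr.trans hs hex⟩
      linarith
    have hn : 0 < 1 / ((n : ℝ) + 1) := by positivity
    linarith
  have hall : ∀ᵐ z ∂γ, ∀ i j,
      ¬ (z.2 = i ∧ l1Dist k z.1 j - l1Dist k z.1 i < ψ j - ψ i) := by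
    refine ae_all_iff.2 fun i => ae_all_iff.2 fun j => ?_
    rw [ae_iff]
    simpa only [not_not] using key i j
  filter_upwards [hall] with z hz j
  have h1 := hz z.2 j
  simp only [true_and, not_lt] at h1
  linarith

end

lemma argminIdx_le {k : ℕ} [NeZero k] (v : Fin k → ℝ) (j : Fin k) : v (argminIdx v) ≤ v j :=
  (Finset.mem_filter.1 (Finset.min'_mem (Finset.univ.filter fun i => ∀ j, v i ≤ v j) _)).2 j

/-- **Corollary D.4.**  Any optimal coupling `γ` between a distribution `p` on the
simplex and a distribution `q` on the vertices (for the ℓ₁ cost) is induced by a map in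
`𝒢_k` off the boundary set: there is `ψ ∈ ℝ^k` such that for `p`-almost every `x` not
lying on a decision boundary `{x ∈ 𝔻^k : ‖x − e_i‖₁ − ψ_i = ‖x − e_j‖₁ − ψ_j}` (`i ≠ j`),
the conditional distribution of the second coordinate of `γ` given the first coordinate
`x` is the point mass at `g_ψ(x)`. -/
theorem optimal_coupling_agrees_with_nearest_vertex_map (k : ℕ) [NeZero k]
    (p : Measure (Fin k → ℝ)) [IsProbabilityMeasure p] (hp : p (simplexSet k) = 1)
    (q : Measure (Fin k)) [IsProbabilityMeasure q]
    (γ : Measure ((Fin k → ℝ) × Fin k)) [IsFiniteMeasure γ] (hγ : IsCoupling γ p q)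
    (hγopt : (∫⁻ z, l1Cost k z.1 z.2 ∂γ) = W1 k p q) :
    ∃ ψ : Fin k → ℝ, ∀ᵐ x ∂p,
      x ∉ (⋃ (i : Fin k) (j : Fin k) (_ : i ≠ j),
          {x : Fin k → ℝ | (∑ l, |x l|) = 1 ∧
            (∑ l, |x l - oneHot k i l|) - ψ i = (∑ l, |x l - oneHot k j l|) - ψ j}) →
        γ.condKernel x = Measure.dirac (gMap ψ x) := by
  obtain ⟨rfl, rfl⟩ := hγ
  have hs : ∀ᵐ x ∂γ.fst, x ∈ simplexSet k :=
    (mem_ae_iff_prob_eq_one (measurableSet_simplexSet k)).2 hp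
  obtain ⟨ψ, hψ⟩ := exists_potential hs hγopt
  refine ⟨ψ, ?_⟩
  rw [← γ.disintegrate γ.condKernel] at hψ
  filter_upwards [hs, Measure.ae_ae_of_ae_compProd hψ] with x hx hmin hE
  have hsum : ∑ l, |x l| = 1 := by
    rw [← hx.2]
    exact Finset.sum_congr rfl fun l _ => abs_of_nonneg (hx.1 l)
  have hae : (fun y : Fin k => y) =ᵐ[γ.condKernel x] fun _ => gMap ψ x := by
    filter_upwards [hmin] with y hy
    by_contra hne
    -- Two distinct minimizers would put `x` on a decision boundary.
    refine hE (Set.mem_iUnion.2 ⟨y, Set.mem_iUnion.2 ⟨gMap ψ x, Set.mem_iUnion.2 ⟨hne, hsum, ?_⟩⟩⟩)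
    exact le_antisymm (hy _) (argminIdx_le (fun i => (∑ l, |x l - oneHot k i l|) - ψ i) y)
  have hmap : (γ.condKernel x).map (fun y : Fin k => y) = (γ.condKernel x).map fun _ => gMap ψ x :=
    Measure.map_congr hae
  rwa [Measure.map_id', Measure.map_const, measure_univ, one_smul] at hmap

end
end

section
/- Let k ≥ 2 and let 𝒢_k be the class of maps g_ψ : Δ_k → {e_1, …, e_k}, ψ ∈ ℝ^k, defined by g_ψ(x) = e_{argmin_{i∈[k]} (‖x − e_i‖₁ − ψ_i)} with ties broken to the smallest index. Then there exists a set C ⊆ Δ_k of cardinality k−1 that is Natarajan-shattered by 𝒢_k: there exist f_0, f_1 : C → [k] with f_0(x) ≠ f_1(x) for all x ∈ C such that for every subset B ⊆ C there is ψ ∈ ℝ^k with g_ψ(x) = e_{f_0(x)} for all x ∈ B and g_ψ(x) = e_{f_1(x)} for all x ∈ C \ B. Consequently the Natarajan dimension of 𝒢_k is at least k−1. -/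
/-!
On the simplex `‖x - e_i‖₁ = 2 - 2 x_i`, so `g_ψ(x)` is the maximizer of `2 x_i + ψ_i`.
The shattered set consists of the midpoints `(e_0 + e_i) / 2`, `i ≠ 0`. With `ψ_0 = 0` and
`ψ_i = ± 1/4` for `i ≠ 0`, the midpoint for `i` scores `1` at index `0`, `1 ± 1/4` at index `i`
and at most `1/4` elsewhere, so the sign of `ψ_i` alone decides between the labels `i` and `0`,
and these signs can be chosen independently.
-/

open scoped BigOperators

noncomputable section

lemma argminIdx_eq {k : ℕ} [NeZero k] (v : Fin k → ℝ) (i : Fin k)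
    (h : ∀ j, j ≠ i → v i < v j) : argminIdx v = i := by
  have hm : argminIdx v ∈ Finset.univ.filter fun i => ∀ j, v i ≤ v j := Finset.min'_mem _ _
  by_contra hne
  exact absurd ((Finset.mem_filter.mp hm).2 i) (not_le.mpr (h _ hne))

lemma l1_dist_oneHot {k : ℕ} {x : Fin k → ℝ} (hx : x ∈ simplexSet k) (i : Fin k) :
    ∑ l, |x l - oneHot k i l| = 2 - 2 * x i := by
  have hle : x i ≤ 1 := hx.2 ▸ Finset.single_le_sum (fun j _ => hx.1 j) (Finset.mem_univ i)
  have h : ∀ l, |x l - oneHot k i l| = x l + if l = i then 2 - 2 * x i - 1 else 0 := by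
    intro l
    unfold oneHot
    split_ifs with hl
    · subst hl
      rw [abs_of_nonpos (by linarith)]
      ring
    · rw [sub_zero, add_zero, abs_of_nonneg (hx.1 l)]
  simp only [h, Finset.sum_add_distrib, hx.2, Finset.sum_ite_eq', Finset.mem_univ, if_true]
  ring

lemma gMap_eq {k : ℕ} [NeZero k] {x : Fin k → ℝ} (hx : x ∈ simplexSet k) (ψ : Fin k → ℝ)
    (i : Fin k) (h : ∀ j, j ≠ i → 2 * x j + ψ j < 2 * x i + ψ i) : gMap ψ x = i := by
  refine argminIdx_eq _ i fun j hj => ?_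
  have := h j hj
  simp only [l1_dist_oneHot hx]
  linarith

/-- The midpoint of the edge from `e_0` to `e_i` (equal to `e_0` itself when `i = 0`). -/
def edgeMid {k : ℕ} [NeZero k] (i : Fin k) : Fin k → ℝ :=
  fun j => (oneHot k 0 j + oneHot k i j) / 2

lemma edgeMid_mem {k : ℕ} [NeZero k] (i : Fin k) : edgeMid i ∈ simplexSet k := by
  constructor
  · intro j
    unfold edgeMid oneHot
    split_ifs <;> norm_num
  · simp only [edgeMid, oneHot, ← Finset.sum_div, Finset.sum_add_distrib, Finset.sum_ite_eq',
      Finset.mem_univ, if_true]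
    norm_num

lemma gMap_edgeMid_self {k : ℕ} [NeZero k] (ψ : Fin k → ℝ) (i : Fin k) (hi : i ≠ 0)
    (h0 : ψ 0 = 0) (hψ : ∀ j, ψ j ≤ 1 / 4) (hp : ψ i = 1 / 4) :
    gMap ψ (edgeMid i) = i := by
  refine gMap_eq (edgeMid_mem i) ψ i fun j hj => ?_
  have := hψ j
  by_cases hj0 : j = 0
  · subst hj0
    simp [edgeMid, oneHot, hi, hj, h0, hp]
  · simp [edgeMid, oneHot, hi, hj, hj0, hp]
    linarith

lemma gMap_edgeMid_zero {k : ℕ} [NeZero k] (ψ : Fin k → ℝ) (i : Fin k) (hi : i ≠ 0)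
    (h0 : ψ 0 = 0) (hψ : ∀ j, ψ j ≤ 1 / 4) (hn : ψ i = -1 / 4) :
    gMap ψ (edgeMid i) = 0 := by
  refine gMap_eq (edgeMid_mem i) ψ 0 fun j hj => ?_
  have := hψ j
  by_cases hji : j = i
  · subst hji
    simp [edgeMid, oneHot, hi, hi.symm, h0, hn]
    norm_num
  · simp [edgeMid, oneHot, hi.symm, hj, hji, h0]
    linarith

/-- **Natarajan dimension lower bound** (Theorem D.6, Part 2).  There is a subset of the
simplex of cardinality `k − 1` that is Natarajan-shattered by the class
`𝒢_k = {g_ψ : ψ ∈ ℝ^k}`: a set `C ⊆ Δ_k` with `|C| = k − 1` together with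
`f₀, f₁ : C → [k]`, `f₀(x) ≠ f₁(x)` on `C`, such that every subset `B ⊆ C` is realized by
some `g_ψ` (outputting `e_{f₀(x)}` on `B` and `e_{f₁(x)}` on `C \ B`).  Consequently the
Natarajan dimension of `𝒢_k` is `≥ k − 1`. -/
theorem natarajan_dim_ge (k : ℕ) (hk : 2 ≤ k) [NeZero k] :
    ∃ C : Finset (Fin k → ℝ), ↑C ⊆ simplexSet k ∧ C.card = k - 1 ∧
      ∃ f0 f1 : (Fin k → ℝ) → Fin k, (∀ x ∈ C, f0 x ≠ f1 x) ∧
        ∀ B ⊆ C, ∃ ψ : Fin k → ℝ,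
          (∀ x ∈ B, gMap ψ x = f0 x) ∧ (∀ x ∈ C, x ∉ B → gMap ψ x = f1 x) := by
  classical
  -- With every sign positive, `g_ψ` recovers `i` from its midpoint; it serves as `f₀`.
  set ψ₁ : Fin k → ℝ := fun j => if j = 0 then 0 else 1 / 4 with hψ₁
  have hself : ∀ i : Fin k, i ≠ 0 → gMap ψ₁ (edgeMid i) = i := fun i hi =>
    gMap_edgeMid_self ψ₁ i hi (by simp [hψ₁])
      (fun j => by simp only [hψ₁]; split_ifs <;> norm_num) (by simp [hψ₁, hi])
  refine ⟨(Finset.univ.erase (0 : Fin k)).image edgeMid, ?_, ?_, gMap ψ₁, fun _ => 0, ?_, ?_⟩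
  · intro x hx
    obtain ⟨i, -, rfl⟩ := Finset.mem_image.mp (Finset.mem_coe.mp hx)
    exact edgeMid_mem i
  · rw [Finset.card_image_of_injOn, Finset.card_erase_of_mem (Finset.mem_univ _),
      Finset.card_univ, Fintype.card_fin]
    intro i hi j hj hij
    rw [← hself i (Finset.ne_of_mem_erase hi), ← hself j (Finset.ne_of_mem_erase hj)]
    exact congrArg (gMap ψ₁) hij
  · intro x hx
    obtain ⟨i, hi, rfl⟩ := Finset.mem_image.mp hx
    rw [hself i (Finset.ne_of_mem_erase hi)]
    exact Finset.ne_of_mem_erase hi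
  · intro B hB
    set ψ : Fin k → ℝ :=
      fun j => if j = 0 then 0 else if edgeMid j ∈ B then 1 / 4 else -1 / 4 with hψ
    have h0 : ψ 0 = 0 := by simp [hψ]
    have hle : ∀ j, ψ j ≤ 1 / 4 := fun j => by
      simp only [hψ]
      split_ifs <;> norm_num
    refine ⟨ψ, fun x hx => ?_, fun x hx hxB => ?_⟩
    · obtain ⟨i, hi, rfl⟩ := Finset.mem_image.mp (hB hx)
      have hi0 := Finset.ne_of_mem_erase hi
      rw [hself i hi0]
      exact gMap_edgeMid_self ψ i hi0 h0 hle (by simp [hψ, hi0, hx])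
    · obtain ⟨i, hi, rfl⟩ := Finset.mem_image.mp hx
      have hi0 := Finset.ne_of_mem_erase hi
      exact gMap_edgeMid_zero ψ i hi0 h0 hle (by simp [hψ, hi0, hxB])

end
end
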